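/- arXiv:1512.06291 — 4 statements merged into one kernel-verified Lean document; each statement's English description precedes it below -/
import Mathlib

section
/- Let W, X1, X2, Y1, Y2 be random variables with values in finite sets on a common probability space, and suppose that Y1 and Y2 are each deterministic functions of the pair (X1, X2). Then I(W; Y1) − I(W; Y2) ≤ H(X1, X2) − H(Y2). -/
/-!
Write `X = (X1, X2)`. After cancelling `H(W)` and `H(Y2)`, the claim reads
`H(Y1) + H(W, Y2) ≤ H(X) + H(W, Y1)`. Since `Y2` is a function of `X`, monotonicity of entropy
under deterministic maps (`DiamondWiretap.H_comp_le`) gives `H(W, Y2) ≤ H(W, X)`. Since `Y1 = f(X)`,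
submodularity gives `H(W, X) + H(Y1) ≤ H(W, Y1) + H(X)`, that is `I(W; X | Y1) ≥ 0`
(`DiamondWiretap.H_submodular`). Adding the two proves the claim.

Both facts are proved by writing the entropy of every variable `g(Z)` as an expectation
`-∑ z, q z * log (marg q g (g z))` over the law `q` of one and the same `Z`
(`DiamondWiretap.H_comp_eq`), and comparing the logarithms pointwise; for submodularity, the
comparison is `log t ≤ t - 1`.
-/

/-!
Shannon entropy, conditional entropy, and mutual information for discrete random
variables defined on a common probability space modelled by a `PMF`.
The logarithm is the natural logarithm and `0 log 0 = 0` (via `Real.negMulLog`).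
-/

namespace DiamondWiretap

/-- Shannon entropy `H(X)` of a random variable `X` on the probability space `(Ω, p)`. -/
noncomputable def H {Ω S : Type*} (p : PMF Ω) (X : Ω → S) : ℝ :=
  ∑' s : S, Real.negMulLog ((p.map X) s).toReal

/-- Joint entropy `H(X, Y)`. -/
noncomputable def H2 {Ω S T : Type*} (p : PMF Ω) (X : Ω → S) (Y : Ω → T) : ℝ :=
  H p (fun ω => (X ω, Y ω))

/-- Conditional entropy `H(X | Y) = H(X, Y) - H(Y)`. -/
noncomputable def condEnt {Ω S T : Type*} (p : PMF Ω) (X : Ω → S) (Y : Ω → T) : ℝ :=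
  H2 p X Y - H p Y

/-- Mutual information `I(X; Y) = H(X) + H(Y) - H(X, Y)`. -/
noncomputable def mutInfo {Ω S T : Type*} (p : PMF Ω) (X : Ω → S) (Y : Ω → T) : ℝ :=
  H p X + H p Y - H2 p X Y

/-- Conditional mutual information `I(X; Y | Z) = H(X,Z) + H(Y,Z) - H(X,Y,Z) - H(Z)`. -/
noncomputable def condMutInfo {Ω S T U : Type*} (p : PMF Ω)
    (X : Ω → S) (Y : Ω → T) (Z : Ω → U) : ℝ :=
  H2 p X Z + H2 p Y Z - H p (fun ω => (X ω, Y ω, Z ω)) - H p Z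

/-- `Z` is almost surely a deterministic function of `X`,
i.e. `Z = φ ∘ X` on the support of `p` for some function `φ`. -/
def IsDetFnOf {Ω S T : Type*} (p : PMF Ω) (Z : Ω → T) (X : Ω → S) : Prop :=
  ∃ φ : S → T, ∀ ω ∈ p.support, Z ω = φ (X ω)

end DiamondWiretap

namespace DiamondWiretap

/-- The marginal at `b` of the weight function `q` under the map `g`, i.e. the total weight of the
fibre of `g` over `b`. -/
noncomputable def marg {A B : Type*} [Fintype A] (q : A → ℝ) (g : A → B) (b : B) : ℝ :=
  open Classical in ∑ a, if g a = b then q a else 0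

/-- The law of `Z` under `p`, as a real-valued function. -/
noncomputable def law {Ω A : Type*} (p : PMF Ω) (Z : Ω → A) (a : A) : ℝ :=
  ((p.map Z) a).toReal

lemma law_nonneg {Ω A : Type*} (p : PMF Ω) (Z : Ω → A) (a : A) : 0 ≤ law p Z a :=
  ENNReal.toReal_nonneg

/-- Entropy only depends on the values taken on the support of `p`. -/
lemma H_congr {Ω S : Type*} (p : PMF Ω) {X Y : Ω → S} (h : ∀ ω ∈ p.support, X ω = Y ω) :
    H p X = H p Y := by
  have hmap : p.map X = p.map Y := by
    ext b
    rw [PMF.map_apply, PMF.map_apply]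
    refine tsum_congr fun ω => ?_
    by_cases hω : ω ∈ p.support
    · rw [h ω hω]
    · have h0 : p ω = 0 := by simpa [PMF.mem_support_iff] using hω
      simp [h0]
  unfold H
  rw [hmap]

lemma law_comp {Ω A B : Type*} [Fintype A] (p : PMF Ω) (Z : Ω → A) (g : A → B) (b : B) :
    law p (fun ω => g (Z ω)) b = marg (law p Z) g b := by
  classical
  have h1 : p.map (fun ω => g (Z ω)) = (p.map Z).map g := (PMF.map_comp Z p g).symm
  unfold law marg
  rw [h1, PMF.map_apply, tsum_fintype, ENNReal.toReal_sum]
  · refine Finset.sum_congr rfl fun a _ => ?_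
    by_cases h : g a = b
    · simp [h]
    · simp [h, Ne.symm h]
  · intro a _
    split_ifs
    · exact PMF.apply_ne_top _ _
    · simp

lemma marg_nonneg {A B : Type*} [Fintype A] {q : A → ℝ} (hq : ∀ a, 0 ≤ q a) (g : A → B) (b : B) :
    0 ≤ marg q g b := by
  classical
  refine Finset.sum_nonneg fun a _ => ?_
  split_ifs
  · exact hq a
  · exact le_rfl

lemma le_marg {A B : Type*} [Fintype A] {q : A → ℝ} (hq : ∀ a, 0 ≤ q a) (g : A → B) (a : A) :
    q a ≤ marg q g (g a) := by
  classical
  unfold marg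
  have := Finset.single_le_sum (f := fun a' => if g a' = g a then q a' else 0)
    (fun a' _ => by split_ifs; exacts [hq a', le_rfl]) (Finset.mem_univ a)
  simpa using this

/-- Marginalising in two steps: summing the marginal over the first coordinate. -/
lemma sum_marg_pair {A B C : Type*} [Fintype A] [Fintype B] (q : A → ℝ) (u : A → B) (v : A → C)
    (c : C) : ∑ b, marg q (fun a => (u a, v a)) (b, c) = marg q v c := by
  classical
  unfold marg
  rw [Finset.sum_comm]
  refine Finset.sum_congr rfl fun a _ => ?_
  by_cases h : v a = c <;> simp [h]

lemma sum_marg {A B : Type*} [Fintype A] [Fintype B] (q : A → ℝ) (g : A → B) :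
    ∑ b, marg q g b = ∑ a, q a := by
  classical
  unfold marg
  rw [Finset.sum_comm]
  simp

/-- The entropy of `g(Z)` as the expectation of `-log P(g(Z))` under the law of `Z`. -/
lemma H_comp_eq {Ω A B : Type*} [Fintype A] [Fintype B] (p : PMF Ω) (Z : Ω → A) (g : A → B) :
    H p (fun ω => g (Z ω)) =
      -∑ a, law p Z a * Real.log (marg (law p Z) g (g a)) := by
  classical
  have h : H p (fun ω => g (Z ω)) = ∑ b, Real.negMulLog (marg (law p Z) g b) := by
    unfold H
    rw [tsum_fintype]
    exact Finset.sum_congr rfl fun b _ => congrArg _ (law_comp p Z g b)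
  have h2 : ∀ b, Real.negMulLog (marg (law p Z) g b) =
      -∑ a, if g a = b then law p Z a * Real.log (marg (law p Z) g (g a)) else 0 := by
    intro b
    rw [Real.negMulLog, neg_mul]
    congr 1
    conv_lhs => enter [1]; unfold marg
    rw [Finset.sum_mul]
    refine Finset.sum_congr rfl fun a _ => ?_
    by_cases hab : g a = b <;> simp [hab]
  rw [h, Finset.sum_congr rfl fun b _ => h2 b, Finset.sum_neg_distrib, Finset.sum_comm]
  simp

lemma H_eq {Ω A : Type*} [Fintype A] (p : PMF Ω) (Z : Ω → A) :
    H p Z = -∑ a, law p Z a * Real.log (law p Z a) := by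
  unfold H law
  rw [tsum_fintype, ← Finset.sum_neg_distrib]
  exact Finset.sum_congr rfl fun a _ => by rw [Real.negMulLog, neg_mul]

/-- Entropy does not increase under a deterministic map. -/
lemma H_comp_le {Ω A B : Type*} [Fintype A] [Fintype B] (p : PMF Ω) (Z : Ω → A) (g : A → B) :
    H p (fun ω => g (Z ω)) ≤ H p Z := by
  rw [H_comp_eq, H_eq]
  refine neg_le_neg (Finset.sum_le_sum fun a _ => ?_)
  rcases (law_nonneg p Z a).eq_or_lt with h0 | h0
  · simp [← h0]
  · exact mul_le_mul_of_nonneg_left (Real.log_le_log h0 (le_marg (law_nonneg p Z) g a)) h0.le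

/-- `I(W; X | f(X)) ≥ 0`, written as submodularity of entropy. -/
lemma H_submodular {Ω A B C : Type*} [Fintype A] [Fintype B] [Fintype C] (p : PMF Ω)
    (W : Ω → A) (X : Ω → B) (f : B → C) :
    H p (fun ω => (W ω, X ω)) + H p (fun ω => f (X ω)) ≤
      H p (fun ω => (W ω, f (X ω))) + H p X := by
  set Z : Ω → A × B := fun ω => (W ω, X ω) with hZ
  have e1 := H_eq p Z
  have e2 := H_comp_eq p Z (fun z => f z.2)
  have e3 := H_comp_eq p Z (fun z => (z.1, f z.2))
  have e4 := H_comp_eq p Z (fun z => z.2)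
  have hq := law_nonneg p Z
  generalize law p Z = q at e1 e2 e3 e4 hq
  set k := marg q (fun z => f z.2) with hk
  set n := marg q (fun z => (z.1, f z.2)) with hn
  set m := marg q (fun z => z.2) with hm
  have key : ∀ z : A × B,
      q z * Real.log (n (z.1, f z.2)) + q z * Real.log (m z.2)
        - q z * Real.log (q z) - q z * Real.log (k (f z.2))
      ≤ n (z.1, f z.2) * (m z.2 / k (f z.2)) - q z := by
    intro z
    have hk0 : 0 ≤ k (f z.2) := marg_nonneg hq _ _
    have hn0 : 0 ≤ n (z.1, f z.2) := marg_nonneg hq _ _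
    have hm0 : 0 ≤ m z.2 := marg_nonneg hq _ _
    rcases (hq z).eq_or_lt with h0 | h0
    · rw [← h0]
      have : 0 ≤ n (z.1, f z.2) * (m z.2 / k (f z.2)) := by positivity
      linarith
    · have hk1 : 0 < k (f z.2) := h0.trans_le (le_marg hq (fun z => f z.2) z)
      have hn1 : 0 < n (z.1, f z.2) := h0.trans_le (le_marg hq (fun z => (z.1, f z.2)) z)
      have hm1 : 0 < m z.2 := h0.trans_le (le_marg hq (fun z => z.2) z)
      have hlog := Real.log_le_sub_one_of_pos
        (show 0 < n (z.1, f z.2) * m z.2 / (q z * k (f z.2)) by positivity)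
      rw [Real.log_div (by positivity) (by positivity), Real.log_mul hn1.ne' hm1.ne',
        Real.log_mul h0.ne' hk1.ne'] at hlog
      have hmul := mul_le_mul_of_nonneg_left hlog h0.le
      have e : q z * (n (z.1, f z.2) * m z.2 / (q z * k (f z.2)) - 1)
          = n (z.1, f z.2) * (m z.2 / k (f z.2)) - q z := by
        field_simp
      rw [e] at hmul
      linarith
  -- The weights `n m / k` have total mass at most that of `q`.
  have tot : ∑ z : A × B, n (z.1, f z.2) * (m z.2 / k (f z.2)) ≤ ∑ z, q z := by
    rw [Fintype.sum_prod_type_right, ← sum_marg q (fun z => z.2)]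
    refine Finset.sum_le_sum fun x _ => ?_
    dsimp only
    rw [← Finset.sum_mul, hn, sum_marg_pair q (fun z => z.1) (fun z => f z.2) (f x), ← hk, ← hm]
    rcases eq_or_ne (k (f x)) 0 with h | h
    · rw [h, zero_mul]
      exact marg_nonneg hq _ _
    · rw [mul_div_cancel₀ _ h]
  have hsum := Finset.sum_le_sum fun z (_ : z ∈ Finset.univ) => key z
  simp only [Finset.sum_sub_distrib, Finset.sum_add_distrib] at hsum
  simp only [hZ] at e1 e2 e3 e4 ⊢
  linarith

end DiamondWiretap

open DiamondWiretap

/-- If `Y1` and `Y2` are deterministic functions of the pair `(X1, X2)`,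
then `I(W; Y1) − I(W; Y2) ≤ H(X1, X2) − H(Y2)`. -/
theorem stmt0 {Ω SW S1 S2 T1 T2 : Type*}
    [Fintype SW] [Fintype S1] [Fintype S2] [Fintype T1] [Fintype T2]
    (p : PMF Ω) (W : Ω → SW) (X1 : Ω → S1) (X2 : Ω → S2)
    (Y1 : Ω → T1) (Y2 : Ω → T2)
    (hY1 : IsDetFnOf p Y1 (fun ω => (X1 ω, X2 ω)))
    (hY2 : IsDetFnOf p Y2 (fun ω => (X1 ω, X2 ω))) :
    mutInfo p W Y1 - mutInfo p W Y2 ≤ H2 p X1 X2 - H p Y2 := by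
  obtain ⟨f, hf⟩ := hY1
  obtain ⟨g, hg⟩ := hY2
  have a1 : H p Y1 = H p (fun ω => f (X1 ω, X2 ω)) := H_congr p hf
  have a2 : H p (fun ω => (W ω, Y1 ω)) = H p (fun ω => (W ω, f (X1 ω, X2 ω))) :=
    H_congr p fun ω hω => by rw [hf ω hω]
  have a3 : H p (fun ω => (W ω, Y2 ω)) = H p (fun ω => (W ω, g (X1 ω, X2 ω))) :=
    H_congr p fun ω hω => by rw [hg ω hω]
  have mono := H_comp_le p (fun ω => (W ω, (X1 ω, X2 ω))) (fun z => (z.1, g z.2))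
  have sub := H_submodular p W (fun ω => (X1 ω, X2 ω)) f
  dsimp only at mono sub
  unfold mutInfo H2
  linarith
end

section
/- Let J1, J2, X1, X2, Y, Z be random variables with values in finite sets on a common probability space. Suppose Z is a deterministic function of X2, Z is also a deterministic function of the pair (Y, X1), and the Markov chain X2 − J2 − (X1, J1) holds in the sense that H(X2 | (J1, J2, X1)) = H(X2 | J2). Then H(Y | (J1, J2)) ≥ H(X2 | J2) − H(X2 | Z). -/
open DiamondWiretap

namespace DiamondWiretap

/-- The probability `P(X = s)`, as a real number. -/
noncomputable def prob {Ω S : Type*} (p : PMF Ω) (X : Ω → S) (s : S) : ℝ :=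
  ((p.map X) s).toReal

theorem prob_nonneg {Ω S : Type*} (p : PMF Ω) (X : Ω → S) (s : S) : 0 ≤ prob p X s :=
  ENNReal.toReal_nonneg

theorem H_eq_sum {Ω S : Type*} [Fintype S] (p : PMF Ω) (X : Ω → S) :
    H p X = ∑ s, Real.negMulLog (prob p X s) := by
  rw [H, tsum_fintype]; rfl

theorem map_eq_of_ae {Ω S : Type*} (p : PMF Ω) (X Y : Ω → S)
    (h : ∀ ω ∈ p.support, X ω = Y ω) : p.map X = p.map Y := by
  ext s
  rw [PMF.map_apply, PMF.map_apply]
  refine tsum_congr fun ω => ?_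
  by_cases hω : p ω = 0
  · simp [hω]
  · rw [h ω ((PMF.mem_support_iff _ _).2 hω)]

open Classical in
theorem prob_of_detFn {Ω S T : Type*} [Fintype S] (p : PMF Ω) (X : Ω → S) (Y : Ω → T)
    (φ : S → T) (h : ∀ ω ∈ p.support, Y ω = φ (X ω)) (t : T) :
    prob p Y t = ∑ s, if t = φ s then prob p X s else 0 := by
  have h1 : p.map Y = (p.map X).map φ := by
    rw [PMF.map_comp]
    exact map_eq_of_ae p _ _ h
  rw [prob, h1, PMF.map_apply, tsum_fintype, ENNReal.toReal_sum]
  · refine Finset.sum_congr rfl fun s _ => ?_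
    split_ifs
    · rfl
    · rfl
  · intro s _
    split_ifs
    · exact PMF.apply_ne_top _ _
    · exact ENNReal.zero_ne_top

theorem negMulLog_sum_le {ι : Type*} (s : Finset ι) (f : ι → ℝ) (hf : ∀ i, 0 ≤ f i) :
    Real.negMulLog (∑ i ∈ s, f i) ≤ ∑ i ∈ s, Real.negMulLog (f i) := by
  simp only [Real.negMulLog, neg_mul, Finset.sum_neg_distrib, neg_le_neg_iff]
  rw [Finset.sum_mul]
  refine Finset.sum_le_sum fun i hi => ?_
  rcases (hf i).eq_or_lt with h0 | h0
  · simp [← h0]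
  · exact mul_le_mul_of_nonneg_left
      (Real.log_le_log h0 (Finset.single_le_sum (fun j _ => hf j) hi)) h0.le

/-- A deterministic function merges atoms, which does not increase entropy. -/
theorem entropy_mono {Ω S T : Type*} [Fintype S] [Fintype T] (p : PMF Ω) (X : Ω → S)
    (Y : Ω → T) (h : IsDetFnOf p Y X) : H p Y ≤ H p X := by
  classical
  obtain ⟨φ, h⟩ := h
  rw [H_eq_sum, H_eq_sum]
  calc ∑ t, Real.negMulLog (prob p Y t)
      ≤ ∑ t, ∑ s, Real.negMulLog (if t = φ s then prob p X s else 0) := by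
        refine Finset.sum_le_sum fun t _ => ?_
        rw [prob_of_detFn p X Y φ h t]
        convert negMulLog_sum_le Finset.univ (fun s => if t = φ s then prob p X s else 0) ?_
        intro s
        split_ifs
        · exact prob_nonneg _ _ _
        · exact le_rfl
    _ = ∑ s, Real.negMulLog (prob p X s) := by
        rw [Finset.sum_comm]
        refine Finset.sum_congr rfl fun s _ => ?_
        simp [apply_ite Real.negMulLog]

/-- The inequality `log x ≤ x - 1` at `x = u v / (r w)`, weighted by `r`. For `w = 0` the quotient
`u * v / w` is `0`, which is harmless because then `r = 0`. -/
theorem mul_log_le (r u v w : ℝ) (hr : 0 ≤ r) (hu : r ≤ u) (hv : r ≤ v) (hw : r ≤ w) :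
    r * Real.log u + r * Real.log v - r * Real.log r - r * Real.log w ≤ u * v / w - r := by
  rcases hr.eq_or_lt with h0 | h0
  · subst h0
    have : 0 ≤ u * v / w := by positivity
    simpa using this
  · have hu' := h0.trans_le hu
    have hv' := h0.trans_le hv
    have hw' := h0.trans_le hw
    have h1 := Real.log_le_sub_one_of_pos (x := u * v / (r * w)) (by positivity)
    rw [Real.log_div (by positivity) (by positivity), Real.log_mul hu'.ne' hv'.ne',
      Real.log_mul h0.ne' hw'.ne'] at h1
    have h2 := mul_le_mul_of_nonneg_left h1 hr
    have h3 : r * (u * v / (r * w) - 1) = u * v / w - r := by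
      field_simp
    rw [h3] at h2
    linarith

/-- Submodularity of entropy for a nonnegative array on a finite product: `u`, `v`, `w` are its
marginals on the first and third, second and third, and third coordinates. -/
theorem submod_array {A B C : Type*} [Fintype A] [Fintype B] [Fintype C]
    (r : A → B → C → ℝ) (hr : ∀ a b c, 0 ≤ r a b c)
    (u : A → C → ℝ) (v : B → C → ℝ) (w : C → ℝ)
    (hu : ∀ a c, u a c = ∑ b, r a b c) (hv : ∀ b c, v b c = ∑ a, r a b c)
    (hw : ∀ c, w c = ∑ a, ∑ b, r a b c) :
    (∑ a, ∑ b, ∑ c, Real.negMulLog (r a b c)) + ∑ c, Real.negMulLog (w c) ≤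
      (∑ a, ∑ c, Real.negMulLog (u a c)) + ∑ b, ∑ c, Real.negMulLog (v b c) := by
  have hwu : ∀ c, w c = ∑ a, u a c := fun c => by simp only [hw, hu]
  have hwv : ∀ c, w c = ∑ b, v b c := fun c => by
    simp only [hw, hv]; exact Finset.sum_comm
  have hru : ∀ a b c, r a b c ≤ u a c := fun a b c => by
    rw [hu]
    exact Finset.single_le_sum (f := fun b => r a b c) (fun b _ => hr a b c) (Finset.mem_univ b)
  have hrv : ∀ a b c, r a b c ≤ v b c := fun a b c => by
    rw [hv]
    exact Finset.single_le_sum (f := fun a => r a b c) (fun a _ => hr a b c) (Finset.mem_univ a)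
  have hu0 : ∀ a c, 0 ≤ u a c := fun a c => by
    rw [hu]; exact Finset.sum_nonneg fun b _ => hr a b c
  have huw : ∀ a c, u a c ≤ w c := fun a c => by
    rw [hwu]
    exact Finset.single_le_sum (f := fun a => u a c) (fun a _ => hu0 a c) (Finset.mem_univ a)
  -- It suffices to prove the inequality for each slice of fixed third coordinate.
  have key : ∀ c, (∑ a, ∑ b, Real.negMulLog (r a b c)) + Real.negMulLog (w c) ≤
      (∑ a, Real.negMulLog (u a c)) + ∑ b, Real.negMulLog (v b c) := by
    intro c
    have h1 : ∑ a, ∑ b, (r a b c * Real.log (u a c) + r a b c * Real.log (v b c)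
        - r a b c * Real.log (r a b c) - r a b c * Real.log (w c)) ≤
        ∑ a, ∑ b, (u a c * v b c / w c - r a b c) :=
      Finset.sum_le_sum fun a _ => Finset.sum_le_sum fun b _ =>
        mul_log_le _ _ _ _ (hr a b c) (hru a b c) (hrv a b c) ((hru a b c).trans (huw a c))
    have h2 : ∑ a, ∑ b, (u a c * v b c / w c - r a b c) = 0 := by
      simp only [Finset.sum_sub_distrib]
      rw [← hw]
      simp only [← Finset.sum_div, ← Finset.mul_sum, ← Finset.sum_mul]
      rw [← hwu, ← hwv, mul_self_div_self, sub_self]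
    have e1 : ∑ a, ∑ b, r a b c * Real.log (u a c) = ∑ a, u a c * Real.log (u a c) := by
      simp only [← Finset.sum_mul, ← hu]
    have e2 : ∑ a, ∑ b, r a b c * Real.log (v b c) = ∑ b, v b c * Real.log (v b c) := by
      rw [Finset.sum_comm]
      simp only [← Finset.sum_mul, ← hv]
    have e3 : ∑ a, ∑ b, r a b c * Real.log (w c) = w c * Real.log (w c) := by
      simp only [← Finset.sum_mul, ← hw]
    rw [h2] at h1
    simp only [Finset.sum_sub_distrib, Finset.sum_add_distrib] at h1
    rw [e1, e2, e3] at h1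
    simp only [Real.negMulLog, neg_mul, Finset.sum_neg_distrib]
    linarith
  have h := Finset.sum_le_sum fun c (_ : c ∈ Finset.univ) => key c
  simp only [Finset.sum_add_distrib] at h
  have s1 : ∑ a, ∑ b, ∑ c, Real.negMulLog (r a b c) =
      ∑ c, ∑ a, ∑ b, Real.negMulLog (r a b c) := by
    rw [Finset.sum_comm (s := (Finset.univ : Finset C))]
    exact Finset.sum_congr rfl fun a _ => Finset.sum_comm
  rw [s1, Finset.sum_comm (f := fun a c => Real.negMulLog (u a c)),
    Finset.sum_comm (f := fun b c => Real.negMulLog (v b c))]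
  exact h

/-- `H(A, B, C) + H(C) ≤ H(A, C) + H(B, C)`. -/
theorem entropy_submod {Ω A B C : Type*} [Fintype A] [Fintype B] [Fintype C] (p : PMF Ω)
    (X : Ω → A) (Y : Ω → B) (Z : Ω → C) :
    H p (fun ω => (X ω, Y ω, Z ω)) + H p Z ≤
      H p (fun ω => (X ω, Z ω)) + H p (fun ω => (Y ω, Z ω)) := by
  classical
  simp only [H_eq_sum, Fintype.sum_prod_type]
  refine submod_array (fun a b c => prob p (fun ω => (X ω, Y ω, Z ω)) (a, b, c))
    (fun a b c => prob_nonneg _ _ _) (fun a c => prob p (fun ω => (X ω, Z ω)) (a, c))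
    (fun b c => prob p (fun ω => (Y ω, Z ω)) (b, c)) _ ?_ ?_ ?_
  · intro a c
    rw [prob_of_detFn p (fun ω => (X ω, Y ω, Z ω)) _ (fun s => (s.1, s.2.2)) fun _ _ => rfl]
    simp [Fintype.sum_prod_type, Prod.mk.injEq, ite_and]
  · intro b c
    rw [prob_of_detFn p (fun ω => (X ω, Y ω, Z ω)) _ (fun s => s.2) fun _ _ => rfl]
    simp [Fintype.sum_prod_type, Prod.mk.injEq, ite_and]
  · intro c
    rw [prob_of_detFn p (fun ω => (X ω, Y ω, Z ω)) _ (fun s => s.2.2) fun _ _ => rfl]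
    simp [Fintype.sum_prod_type]

end DiamondWiretap

/-- If `Z` is a deterministic function of `X2` and also of `(Y, X1)`, and
the Markov chain `X2 − J2 − (X1, J1)` holds (`H(X2 | (J1, J2, X1)) = H(X2 | J2)`),
then `H(Y | (J1, J2)) ≥ H(X2 | J2) − H(X2 | Z)`. -/
theorem stmt2 {Ω SJ1 SJ2 S1 S2 T U : Type*}
    [Fintype SJ1] [Fintype SJ2] [Fintype S1] [Fintype S2] [Fintype T] [Fintype U]
    (p : PMF Ω) (J1 : Ω → SJ1) (J2 : Ω → SJ2) (X1 : Ω → S1) (X2 : Ω → S2)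
    (Y : Ω → T) (Z : Ω → U)
    (hZ1 : IsDetFnOf p Z X2)
    (hZ2 : IsDetFnOf p Z (fun ω => (Y ω, X1 ω)))
    (hMarkov : condEnt p X2 (fun ω => (J1 ω, J2 ω, X1 ω)) = condEnt p X2 J2) :
    condEnt p X2 J2 - condEnt p X2 Z ≤ condEnt p Y (fun ω => (J1 ω, J2 ω)) := by
  obtain ⟨ψ, hψ⟩ := hZ2
  -- `H(Y | V) ≥ H(Y | W)`
  have a1 := entropy_submod p Y X1 (fun ω => (J1 ω, J2 ω))
  have a2 : H p (fun ω => (X1 ω, (J1 ω, J2 ω))) ≤ H p (fun ω => (J1 ω, J2 ω, X1 ω)) :=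
    entropy_mono p _ _ ⟨fun s => (s.2.2, s.1, s.2.1), fun _ _ => rfl⟩
  -- `H(Y, W) ≥ H(Z, W)`
  have a3 : H p (fun ω => (Z ω, (J1 ω, J2 ω, X1 ω))) ≤
      H p (fun ω => (Y ω, X1 ω, (J1 ω, J2 ω))) :=
    entropy_mono p _ _ ⟨fun s => (ψ (s.1, s.2.1), s.2.2.1, s.2.2.2, s.2.1),
      fun ω hω => by simp only [hψ ω hω]⟩
  -- `H(X2, W) ≤ H(X2, W, Z)`, then `H(X2 | W, Z) ≤ H(X2 | Z)`
  have a4 : H p (fun ω => (X2 ω, (J1 ω, J2 ω, X1 ω))) ≤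
      H p (fun ω => (X2 ω, (J1 ω, J2 ω, X1 ω), Z ω)) :=
    entropy_mono p _ _ ⟨fun s => (s.1, s.2.1), fun _ _ => rfl⟩
  have a5 := entropy_submod p X2 (fun ω => (J1 ω, J2 ω, X1 ω)) Z
  have a6 : H p (fun ω => ((J1 ω, J2 ω, X1 ω), Z ω)) ≤
      H p (fun ω => (Z ω, (J1 ω, J2 ω, X1 ω))) :=
    entropy_mono p _ _ ⟨fun s => (s.2, s.1), fun _ _ => rfl⟩
  rw [← hMarkov]
  simp only [condEnt, H2]
  linarith
end

section
/- Let M ≥ 2 be an integer and let W, Y1, Y2, Z1, and X_1, …, X_M, J_2, …, J_M be random variables with values in finite sets on a common probability space. Suppose: (i) Y1 and Y2 are each deterministic functions of the tuple (X_1, …, X_M); and (ii) Z1 is a deterministic function of X_1 and also a deterministic function of the tuple (Y2, X_2, …, X_M). Then I(W; Y1) − I(W; Y2) ≤ ∑_{k=2}^M H(J_k) + ∑_{k=2}^M H(X_k | J_k) + H(X_1 | Z1). -/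
namespace DiamondWiretap

/-- The probability `P(X = s)`, as a real number. -/
noncomputable def mass {Ω S : Type*} (p : PMF Ω) (X : Ω → S) (s : S) : ℝ :=
  ((p.map X) s).toReal

section
variable {Ω S T U : Type*} {p : PMF Ω}

lemma mass_nonneg (X : Ω → S) (s : S) : 0 ≤ mass p X s := ENNReal.toReal_nonneg

lemma mass_le_one (X : Ω → S) (s : S) : mass p X s ≤ 1 :=
  ENNReal.toReal_le_of_le_ofReal zero_le_one (by rw [ENNReal.ofReal_one]; exact PMF.coe_le_one _ s)

lemma H_eq_s8 [Fintype S] (X : Ω → S) : H p X = ∑ s, Real.negMulLog (mass p X s) :=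
  tsum_fintype _

lemma H_nonneg [Fintype S] (X : Ω → S) : 0 ≤ H p X := by
  rw [H_eq_s8]
  exact Finset.sum_nonneg fun s _ => Real.negMulLog_nonneg (mass_nonneg X s) (mass_le_one X s)

open Classical in
lemma map_eq_of_detFn {X : Ω → S} {Z : Ω → T} {φ : S → T}
    (h : ∀ ω ∈ p.support, Z ω = φ (X ω)) : p.map Z = (p.map X).map φ := by
  rw [PMF.map_comp]
  ext t
  rw [PMF.map_apply, PMF.map_apply]
  refine tsum_congr fun ω => ?_
  by_cases hω : ω ∈ p.support
  · simp [h ω hω]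
  · simp [(PMF.apply_eq_zero_iff p ω).2 hω]

open Classical in
/-- The law of a function of `X` is obtained by summing the law of `X` over fibres. -/
lemma mass_eq_sum [Fintype S] {X : Ω → S} {Z : Ω → T} {φ : S → T}
    (h : ∀ ω ∈ p.support, Z ω = φ (X ω)) (t : T) :
    mass p Z t = ∑ s, if φ s = t then mass p X s else 0 := by
  unfold mass
  rw [map_eq_of_detFn h, PMF.map_apply, tsum_fintype, ENNReal.toReal_sum]
  · refine Finset.sum_congr rfl fun s _ => ?_
    by_cases hs : φ s = t
    · simp [hs]
    · simp [hs, Ne.symm hs]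
  · intro s _
    split_ifs
    · exact PMF.apply_ne_top _ _
    · simp

lemma mass_le_mass [Fintype S] {X : Ω → S} {Z : Ω → T} {φ : S → T}
    (h : ∀ ω ∈ p.support, Z ω = φ (X ω)) (s : S) : mass p X s ≤ mass p Z (φ s) := by
  classical
  rw [mass_eq_sum h]
  have := Finset.single_le_sum (f := fun s' => if φ s' = φ s then mass p X s' else 0)
    (fun s' _ => by split_ifs <;> simp [mass_nonneg]) (Finset.mem_univ s)
  simpa using this

lemma sum_mass [Fintype S] (X : Ω → S) : ∑ s, mass p X s = 1 := by
  unfold mass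
  rw [← ENNReal.toReal_sum fun s _ => PMF.apply_ne_top _ _,
    ← tsum_fintype (L := .unconditional S), PMF.tsum_coe, ENNReal.toReal_one]

/-- The entropy of a function `Z = φ(X)` as an expectation under the law of `X`. -/
lemma H_eq_sum_s8 [Fintype S] [Fintype T] {X : Ω → S} {Z : Ω → T} {φ : S → T}
    (h : ∀ ω ∈ p.support, Z ω = φ (X ω)) :
    H p Z = ∑ s, mass p X s * -Real.log (mass p Z (φ s)) := by
  classical
  rw [H_eq_s8]
  calc ∑ t, Real.negMulLog (mass p Z t)
      = ∑ t, ∑ s, if φ s = t then mass p X s * -Real.log (mass p Z t) else 0 := by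
        refine Finset.sum_congr rfl fun t _ => ?_
        rw [Real.negMulLog, neg_mul_comm]
        -- Only the factor outside the logarithm is expanded over the fibre of `φ`.
        conv_lhs => rw [mass_eq_sum h t, Finset.sum_mul, ← mass_eq_sum h t]
        exact Finset.sum_congr rfl fun s _ => by split_ifs <;> simp
    _ = _ := by
        rw [Finset.sum_comm]
        simp

/-- Monotonicity of entropy. -/
lemma H_le_of_isDetFnOf [Fintype S] [Fintype T] {X : Ω → S} {Z : Ω → T}
    (h : IsDetFnOf p Z X) : H p Z ≤ H p X := by
  obtain ⟨φ, h⟩ := h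
  rw [H_eq_sum_s8 h, H_eq_sum_s8 (X := X) (Z := X) (φ := id) fun _ _ => rfl]
  refine Finset.sum_le_sum fun s _ => ?_
  rcases (mass_nonneg (p := p) X s).eq_or_lt with h0 | h0
  · simp [← h0]
  · exact mul_le_mul_of_nonneg_left
      (neg_le_neg (Real.log_le_log h0 (mass_le_mass h s))) h0.le

lemma mass_snd [Fintype S] [Fintype T] (X : Ω → S) (Z : Ω → T) (t : T) :
    mass p Z t = ∑ s, mass p (fun ω => (X ω, Z ω)) (s, t) := by
  classical
  rw [mass_eq_sum (X := fun ω => (X ω, Z ω)) (φ := Prod.snd) fun _ _ => rfl,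
    Fintype.sum_prod_type]
  simp

/-- Submodularity of entropy, that is `0 ≤ I(X;Y|Z)`. -/
lemma H_submod [Fintype S] [Fintype T] [Fintype U] (X : Ω → S) (Y : Ω → T) (Z : Ω → U) :
    H p (fun ω => (X ω, Y ω, Z ω)) + H p Z
      ≤ H p (fun ω => (X ω, Z ω)) + H p (fun ω => (Y ω, Z ω)) := by
  set V : Ω → S × T × U := fun ω => (X ω, Y ω, Z ω)
  have hZ : ∀ ω ∈ p.support, Z ω = (fun v : S × T × U => v.2.2) (V ω) := fun _ _ => rfl
  have hX : ∀ ω ∈ p.support, (X ω, Z ω) = (fun v : S × T × U => (v.1, v.2.2)) (V ω) :=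
    fun _ _ => rfl
  have hY : ∀ ω ∈ p.support, (Y ω, Z ω) = (fun v : S × T × U => v.2) (V ω) := fun _ _ => rfl
  rw [H_eq_sum_s8 (X := V) (φ := fun v => v.2.2) hZ, H_eq_sum_s8 (X := V) (Z := fun ω => (X ω, Z ω))
      (φ := fun v => (v.1, v.2.2)) hX,
    H_eq_sum_s8 (X := V) (Z := fun ω => (Y ω, Z ω)) (φ := fun v => v.2) hY,
    H_eq_sum_s8 (X := V) (Z := V) (φ := id) fun _ _ => rfl]
  -- Pointwise, `log x ≥ 1 - 1/x` with `x = P(x,y,z) P(z) / (P(x,z) P(y,z))`.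
  have key : ∀ v : S × T × U,
      mass p V v * -Real.log (mass p V v) + mass p V v * -Real.log (mass p Z v.2.2)
        + (mass p V v - mass p (fun ω => (X ω, Z ω)) (v.1, v.2.2)
            * mass p (fun ω => (Y ω, Z ω)) v.2 / mass p Z v.2.2)
      ≤ mass p V v * -Real.log (mass p (fun ω => (X ω, Z ω)) (v.1, v.2.2))
        + mass p V v * -Real.log (mass p (fun ω => (Y ω, Z ω)) v.2) := by
    intro v
    have hc := mass_le_mass (X := V) (φ := fun v => v.2.2) hZ v
    have ha := mass_le_mass (X := V) (Z := fun ω => (X ω, Z ω)) (φ := fun v => (v.1, v.2.2)) hX v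
    have hb := mass_le_mass (X := V) (Z := fun ω => (Y ω, Z ω)) (φ := fun v => v.2) hY v
    have hr := mass_nonneg (p := p) V v
    generalize mass p V v = r at *
    generalize mass p Z v.2.2 = c at *
    generalize mass p (fun ω => (X ω, Z ω)) (v.1, v.2.2) = a at *
    generalize mass p (fun ω => (Y ω, Z ω)) v.2 = b at *
    rcases hr.eq_or_lt with h0 | h0
    · subst h0
      have : 0 ≤ a * b / c := by positivity
      simpa using this
    · have hc0 := h0.trans_le hc
      have ha0 := h0.trans_le ha
      have hb0 := h0.trans_le hb
      have h1 := Real.log_le_sub_one_of_pos (x := a * b / c / r) (by positivity)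
      rw [Real.log_div (by positivity) h0.ne', Real.log_div (by positivity) hc0.ne',
        Real.log_mul ha0.ne' hb0.ne'] at h1
      have h2 := mul_le_mul_of_nonneg_left h1 h0.le
      have h3 : r * (a * b / c / r - 1) = a * b / c - r := by field_simp
      rw [h3] at h2
      linarith
  -- Hence the correction terms sum to `1 - 1 = 0`; where `P(z) = 0` the numerator vanishes too,
  -- and the junk value `0 / 0 = 0` is the right one.
  have hsum : ∑ v : S × T × U, mass p (fun ω => (X ω, Z ω)) (v.1, v.2.2)
      * mass p (fun ω => (Y ω, Z ω)) v.2 / mass p Z v.2.2 = 1 := by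
    simp only [Fintype.sum_prod_type]
    calc ∑ s, ∑ t, ∑ u, mass p (fun ω => (X ω, Z ω)) (s, u)
          * mass p (fun ω => (Y ω, Z ω)) (t, u) / mass p Z u
        = ∑ u, (∑ s, mass p (fun ω => (X ω, Z ω)) (s, u))
            * (∑ t, mass p (fun ω => (Y ω, Z ω)) (t, u)) / mass p Z u := by
          rw [Finset.sum_congr rfl fun s _ => Finset.sum_comm, Finset.sum_comm]
          refine Finset.sum_congr rfl fun u _ => ?_
          rw [Finset.sum_mul_sum, Finset.sum_div]
          exact Finset.sum_congr rfl fun s _ => by rw [Finset.sum_div]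
      _ = ∑ u, mass p Z u := by
          refine Finset.sum_congr rfl fun u _ => ?_
          rw [← mass_snd, ← mass_snd, mul_self_div_self]
      _ = 1 := sum_mass Z
  have := Finset.sum_le_sum fun v (_ : v ∈ Finset.univ) => key v
  simp only [Finset.sum_add_distrib, Finset.sum_sub_distrib, hsum, sum_mass] at this
  simpa using this

/-- Subadditivity: submodularity conditioned on a constant. -/
lemma H_pair_le [Fintype S] [Fintype T] (X : Ω → S) (Y : Ω → T) :
    H p (fun ω => (X ω, Y ω)) ≤ H p X + H p Y := by
  have h := H_submod (p := p) X Y fun _ => ()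
  have h0 := H_nonneg (p := p) fun _ : Ω => ()
  have h1 : H p (fun ω => (X ω, Y ω)) ≤ H p (fun ω => (X ω, Y ω, ())) :=
    H_le_of_isDetFnOf ⟨fun v => (v.1, v.2.1), fun _ _ => rfl⟩
  have h2 : H p (fun ω => (X ω, ())) ≤ H p X :=
    H_le_of_isDetFnOf ⟨fun x => (x, ()), fun _ _ => rfl⟩
  have h3 : H p (fun ω => (Y ω, ())) ≤ H p Y :=
    H_le_of_isDetFnOf ⟨fun x => (x, ()), fun _ _ => rfl⟩
  linarith

end

open Classical in
lemma H_finset_le {Ω ι : Type*} {p : PMF Ω} {S : ι → Type*} [∀ i, Fintype (S i)]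
    (X : (i : ι) → Ω → S i) (s : Finset ι) :
    H p (fun ω => (fun i : s => X i.1 ω)) ≤ ∑ i ∈ s, H p (X i) := by
  induction s using Finset.induction_on with
  | empty =>
    -- The empty tuple is constant, with law concentrated at one point.
    rw [H_eq_s8, Fintype.sum_unique, Finset.sum_empty]
    have := sum_mass (p := p) (fun ω => (fun i : (∅ : Finset ι) => X i.1 ω))
    rw [Fintype.sum_unique] at this
    rw [this, Real.negMulLog_one]
  | insert a s ha ih =>
    rw [Finset.sum_insert ha]
    refine le_trans (H_le_of_isDetFnOf ?_) ((H_pair_le (X a)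
      (fun ω => (fun i : s => X i.1 ω))).trans (by linarith))
    refine ⟨fun v i => if h : i.1 = a then (cast (by rw [h]) v.1 : S i.1) else
      v.2 ⟨i.1, (Finset.mem_insert.1 i.2).resolve_left h⟩, fun ω _ => ?_⟩
    funext ⟨i, hi⟩
    by_cases h : i = a
    · subst h; simp
    · simp [h]

open Classical in
lemma H_pi_le {Ω ι : Type*} [Fintype ι] {p : PMF Ω} {S : ι → Type*} [∀ i, Fintype (S i)]
    (X : (i : ι) → Ω → S i) :
    H p (fun ω => (fun i => X i ω)) ≤ ∑ i, H p (X i) :=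
  (H_le_of_isDetFnOf (X := fun ω => (fun i : (Finset.univ : Finset ι) => X i.1 ω))
    ⟨fun v i => v ⟨i, Finset.mem_univ i⟩, fun _ _ => rfl⟩).trans
    (H_finset_le X Finset.univ)

end DiamondWiretap

open DiamondWiretap

/-- converse inequality (47) for the `M`-relay diamond-wiretap channel
with full CSI.  Relay `k` (for `k = 1, …, M`) is indexed by `⟨k-1⟩ : Fin M`; relay `1`
is the index whose value is `0`, and the link messages `J_2, …, J_M` are indexed by the
indices different from it:
`I(W; Y1) − I(W; Y2) ≤ ∑_{k=2}^M H(J_k) + ∑_{k=2}^M H(X_k | J_k) + H(X_1 | Z1)`. -/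
theorem stmt8 {Ω SW T1 T2 U : Type*} (M : ℕ) (hM : 2 ≤ M)
    [Fintype SW] [Fintype T1] [Fintype T2] [Fintype U]
    (S : Fin M → Type*) [∀ k, Fintype (S k)]
    (TJ : {k : Fin M // (k : ℕ) ≠ 0} → Type*) [∀ k, Fintype (TJ k)]
    (p : PMF Ω) (W : Ω → SW) (Y1 : Ω → T1) (Y2 : Ω → T2) (Z1 : Ω → U)
    (X : (k : Fin M) → Ω → S k)
    (J : (k : {k : Fin M // (k : ℕ) ≠ 0}) → Ω → TJ k)
    (hY1 : IsDetFnOf p Y1 (fun ω => (fun k => X k ω : (k : Fin M) → S k)))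
    (hY2 : IsDetFnOf p Y2 (fun ω => (fun k => X k ω : (k : Fin M) → S k)))
    (hZ1a : IsDetFnOf p Z1 (X ⟨0, by omega⟩))
    (hZ1b : IsDetFnOf p Z1
      (fun ω => (Y2 ω, fun k : {k : Fin M // (k : ℕ) ≠ 0} => X k.1 ω))) :
    mutInfo p W Y1 - mutInfo p W Y2
      ≤ (∑ k : {k : Fin M // (k : ℕ) ≠ 0}, H p (J k))
        + (∑ k : {k : Fin M // (k : ℕ) ≠ 0}, condEnt p (X k.1) (J k))
        + condEnt p (X ⟨0, by omega⟩) Z1 := by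
  classical
  set A : Ω → (k : Fin M) → S k := fun ω k => X k ω with hA
  set R : Ω → (k : {k : Fin M // (k : ℕ) ≠ 0}) → S k.1 := fun ω k => X k.1 ω with hR
  set X1 := X ⟨0, by omega⟩ with hX1
  obtain ⟨f2, hf2⟩ := hY2
  obtain ⟨g, hg⟩ := hZ1b
  have dataProc := H_submod (p := p) W A Y1
  have hAY1 : H p (fun ω => (A ω, Y1 ω)) ≤ H p A := by
    obtain ⟨f1, hf1⟩ := hY1
    exact H_le_of_isDetFnOf ⟨fun a => (a, f1 a), fun ω h => by simp only [hf1 ω h]⟩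
  have hWA : H p (fun ω => (W ω, A ω)) ≤ H p (fun ω => (W ω, A ω, Y1 ω)) :=
    H_le_of_isDetFnOf ⟨fun v => (v.1, v.2.1), fun _ _ => rfl⟩
  have hWY2 : H p (fun ω => (W ω, Y2 ω)) ≤ H p (fun ω => (W ω, A ω)) :=
    H_le_of_isDetFnOf ⟨fun v => (v.1, f2 v.2), fun ω h => by simp only [hf2 ω h]⟩
  have hsplit := H_submod (p := p) X1 (fun ω => (R ω, Y2 ω)) Z1
  have hA_le : H p A ≤ H p (fun ω => (X1 ω, (R ω, Y2 ω), Z1 ω)) := by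
    refine H_le_of_isDetFnOf ⟨fun v k => if h : k = ⟨0, by omega⟩ then h ▸ v.1 else
      v.2.1.1 ⟨k, fun h0 => h (Fin.ext h0)⟩, fun ω _ => ?_⟩
    funext k
    by_cases h : k = ⟨0, by omega⟩
    · subst h; simp [hA, hX1]
    · simp [h, hA, hR]
  have hRYZ : H p (fun ω => ((R ω, Y2 ω), Z1 ω)) ≤ H p (fun ω => (R ω, Y2 ω)) :=
    H_le_of_isDetFnOf ⟨fun v => (v, g (v.2, v.1)), fun ω h => by simp only [hg ω h, hR]⟩
  have hRY := H_pair_le (p := p) R Y2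
  have hRsum : H p R ≤ ∑ k : {k : Fin M // (k : ℕ) ≠ 0}, H p (X k.1) :=
    H_pi_le fun k : {k : Fin M // (k : ℕ) ≠ 0} => X k.1
  have hJ : ∑ k : {k : Fin M // (k : ℕ) ≠ 0}, H p (X k.1)
      ≤ (∑ k : {k : Fin M // (k : ℕ) ≠ 0}, H p (J k))
        + ∑ k : {k : Fin M // (k : ℕ) ≠ 0}, condEnt p (X k.1) (J k) := by
    rw [← Finset.sum_add_distrib]
    refine Finset.sum_le_sum fun k _ => ?_
    have : H p (X k.1) ≤ H2 p (X k.1) (J k) :=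
      H_le_of_isDetFnOf ⟨Prod.fst, fun _ _ => rfl⟩
    unfold condEnt
    linarith
  have hcond : condEnt p X1 Z1 = H p (fun ω => (X1 ω, Z1 ω)) - H p Z1 := rfl
  simp only [mutInfo, H2]
  linarith
end

section
/- Let M ≥ 2 be an integer and α ≥ 0 a real number. Then min{Mα, (Mα + M − 1)/(M + 1), 1} ≤ min{Mα, (2M(M − 1) + M²α)/(2M² − M + 2), 1}, and the inequality is strict if and only if (M − 1)/M² < α < 2/M. -/
/-!
Write `x = Mα`, `f = (x + M - 1)/(M + 1)` and `g = (2M(M-1) + Mx)/(2M² - M + 2)`. If `f < 1`,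
i.e. `x < 2`, then `f < g`: the line `f` is steeper than `g` and at `x = 2` it is still not above it
(`f = 1 ≤ g`). If `f ≥ 1`, then `g ≥ 1`. So replacing `f` by `g` in `min {x, f, 1}` never decreases
the minimum, and increases it exactly when `f` is strictly the smallest of the three terms
(`min_lt_min_aux`), that is, when `f < x` and `f < 1`; these are the two bounds on `α`.
-/

/-- If `f < g` whenever `f < 1`, and `g ≥ 1` otherwise, then replacing `f` by `g` in
`min {x, f, 1}` gives a strict increase exactly when `f` is the strict minimum. -/
theorem min_lt_min_aux {x f g : ℝ} (h₁ : f < 1 → f < g) (h₂ : 1 ≤ f → 1 ≤ g) :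
    min x (min f 1) ≤ min x (min g 1) ∧
      (min x (min f 1) < min x (min g 1) ↔ f < x ∧ f < 1) := by
  rcases lt_or_ge f 1 with hf | hf
  · have hg := h₁ hf
    refine ⟨by gcongr, fun h => ⟨?_, hf⟩, fun h => ?_⟩
    · by_contra! hx
      rw [min_eq_left hf.le, min_eq_left hx] at h
      exact absurd h (min_le_left _ _).not_gt
    · rw [min_eq_left hf.le, min_eq_right h.1.le]
      exact lt_min h.1 (lt_min hg hf)
  · rw [min_eq_right hf, min_eq_right (h₂ hf)]
    exact ⟨le_rfl, fun h => absurd h (lt_irrefl _), fun h => absurd h.2 hf.not_gt⟩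


/-- for `2 ≤ M` and `α ≥ 0`, the secure d.o.f. with no eavesdropper's CSI
(Theorem 6), `min{Mα, (Mα+M−1)/(M+1), 1}`, is at most the achievable secure d.o.f.
with full CSI (Theorem 5), `min{Mα, (2M(M−1)+M²α)/(2M²−M+2), 1}`, with strict
inequality exactly for `(M−1)/M² < α < 2/M`. -/
theorem stmt15 (M : ℕ) (hM : 2 ≤ M) (α : ℝ) (hα : 0 ≤ α) :
    min ((M : ℝ) * α)
        (min (((M : ℝ) * α + (M : ℝ) - 1) / ((M : ℝ) + 1)) 1)
      ≤ min ((M : ℝ) * α)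
          (min ((2 * (M : ℝ) * ((M : ℝ) - 1) + (M : ℝ) ^ 2 * α)
                / (2 * (M : ℝ) ^ 2 - (M : ℝ) + 2)) 1)
    ∧ (min ((M : ℝ) * α)
          (min (((M : ℝ) * α + (M : ℝ) - 1) / ((M : ℝ) + 1)) 1)
        < min ((M : ℝ) * α)
            (min ((2 * (M : ℝ) * ((M : ℝ) - 1) + (M : ℝ) ^ 2 * α)
                  / (2 * (M : ℝ) ^ 2 - (M : ℝ) + 2)) 1)
      ↔ ((M : ℝ) - 1) / (M : ℝ) ^ 2 < α ∧ α < 2 / (M : ℝ)) := by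
  have hm : (2 : ℝ) ≤ M := by exact_mod_cast hM
  generalize (M : ℝ) = m at hm ⊢
  have hm0 : 0 < m := by linarith
  have hd : 0 < m + 1 := by linarith
  have hD : 0 < 2 * m ^ 2 - m + 2 := by nlinarith
  have hx : (m * α + m - 1) / (m + 1) < m * α ↔ (m - 1) / m ^ 2 < α := by
    rw [div_lt_iff₀ hd, div_lt_iff₀ (by positivity)]
    constructor <;> intro h <;> linarith
  have h1 : (m * α + m - 1) / (m + 1) < 1 ↔ α < 2 / m := by
    rw [div_lt_one hd, lt_div_iff₀ hm0]
    constructor <;> intro h <;> linarith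
  rw [← hx, ← h1]
  apply min_lt_min_aux
  · intro h
    rw [div_lt_one hd] at h
    rw [div_lt_div_iff₀ hd hD]
    -- The cross-multiplied difference is `(2 - mα)((m - 1)² + 1) + (m + 1)(m - 2)`.
    have a : 0 < (2 - m * α) * ((m - 1) ^ 2 + 1) := mul_pos (by linarith) (by positivity)
    have b : 0 ≤ (m + 1) * (m - 2) := mul_nonneg hd.le (by linarith)
    linarith
  · intro h
    rw [one_le_div hd] at h
    rw [one_le_div hD]
    have a : 0 ≤ m * (m * α - 2) := mul_nonneg hm0.le (by linarith)
    linarith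
end
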